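/- Let n = qk with k ≥ 3 and q ≥ 1, and let F ⊆ C([n],k) be a non-trivial union-q-efficient family. Then |F| ≤ C(n−q, k) + q, and equality holds only for the family consisting of q pairwise disjoint k-sets each containing one of q designated elements, together with all k-subsets of the remaining n−q elements. -/

import Mathlib

/-- orders in which `A` precedes `C` -/
def ordBefore {n : ℕ} (A C : Finset (Fin n)) : Finset (Equiv.Perm (Fin n)) :=
  Finset.univ.filter fun σ => ∀ a ∈ A, ∀ c ∈ C, σ a < σ c

theorem mem_ordBefore {n : ℕ} {A C : Finset (Fin n)} {σ : Equiv.Perm (Fin n)} :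
    σ ∈ ordBefore A C ↔ ∀ a ∈ A, ∀ c ∈ C, σ a < σ c := by
  simp [ordBefore]

theorem exists_perm_maps {n : ℕ} {A C A' C' : Finset (Fin n)} (hA : A.card = A'.card)
    (hC : C.card = C'.card) (h : Disjoint A C) (h' : Disjoint A' C') :
    ∃ τ : Equiv.Perm (Fin n), (∀ a ∈ A, τ a ∈ A') ∧ (∀ c ∈ C, τ c ∈ C') := by
  classical
  let e : {x // x ∈ A ∪ C} ≃ {x // x ∈ A' ∪ C'} :=
    ((Equiv.Finset.union A C h).symm.trans
      (Equiv.sumCongr (Finset.equivOfCardEq hA) (Finset.equivOfCardEq hC))).trans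
      (Equiv.Finset.union A' C' h')
  refine ⟨e.extendSubtype, ?_, ?_⟩
  · intro a ha
    rw [Equiv.extendSubtype_apply_of_mem e a (Finset.mem_union_left _ ha)]
    have : (Equiv.Finset.union A C h).symm ⟨a, Finset.mem_union_left _ ha⟩ = Sum.inl ⟨a, ha⟩ := by
      rw [Equiv.symm_apply_eq]; rfl
    simp [e, this]
  · intro a ha
    rw [Equiv.extendSubtype_apply_of_mem e a (Finset.mem_union_right _ ha)]
    have : (Equiv.Finset.union A C h).symm ⟨a, Finset.mem_union_right _ ha⟩ = Sum.inr ⟨a, ha⟩ := by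
      rw [Equiv.symm_apply_eq]; rfl
    simp [e, this]

theorem card_ordBefore_le {n : ℕ} {A C A' C' : Finset (Fin n)} (hA : A.card = A'.card)
    (hC : C.card = C'.card) (h : Disjoint A C) (h' : Disjoint A' C') :
    (ordBefore A' C').card ≤ (ordBefore A C).card := by
  obtain ⟨τ, h1, h2⟩ := exists_perm_maps hA hC h h'
  refine Finset.card_le_card_of_injOn (fun σ => σ * τ) ?_ ?_
  · intro σ hσ
    have hσ := mem_ordBefore.1 hσ
    exact mem_ordBefore.2 fun a ha c hc => hσ _ (h1 a ha) _ (h2 c hc)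
  · intro σ _ σ' _ hh
    exact mul_right_cancel hh

theorem exists_initial {n : ℕ} (σ : Equiv.Perm (Fin n)) (U : Finset (Fin n)) (k : ℕ)
    (hk : k ≤ U.card) : ∃ A ∈ U.powersetCard k, σ ∈ ordBefore A (U \ A) := by
  induction k with
  | zero => exact ⟨∅, by simp, by simp [mem_ordBefore]⟩
  | succ k ih =>
    obtain ⟨A, hA, hσ⟩ := ih (by omega)
    rw [Finset.mem_powersetCard] at hA
    have hne : (U \ A).Nonempty := by
      rw [← Finset.card_pos, Finset.card_sdiff_of_subset hA.1]; omega
    obtain ⟨m, hm, hmin⟩ := Finset.exists_min_image (U \ A) σ hne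
    rw [mem_ordBefore] at hσ
    rw [Finset.mem_sdiff] at hm
    refine ⟨insert m A, ?_, ?_⟩
    · rw [Finset.mem_powersetCard, Finset.card_insert_of_notMem hm.2]
      exact ⟨Finset.insert_subset hm.1 hA.1, by omega⟩
    · rw [mem_ordBefore]
      intro a ha c hc
      simp only [Finset.mem_sdiff, Finset.mem_insert, not_or] at hc
      rcases Finset.mem_insert.1 ha with rfl | ha
      · refine lt_of_le_of_ne (hmin c (by simp [hc])) fun h => hc.2.1 (σ.injective h).symm
      · exact hσ a ha c (by simp [hc])

theorem card_mul_ordBefore {n k l : ℕ} {A C : Finset (Fin n)} (hA : A.card = k) (hC : C.card = l)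
    (h : Disjoint A C) :
    Fintype.card (Equiv.Perm (Fin n)) ≤ (k + l).choose k * (ordBefore A C).card := by
  have hU : (A ∪ C).card = k + l := by rw [Finset.card_union_of_disjoint h, hA, hC]
  rw [← hU, ← Finset.card_powersetCard]
  rw [← Finset.card_univ]
  calc (Finset.univ : Finset (Equiv.Perm (Fin n))).card
      ≤ (((A ∪ C).powersetCard k).biUnion fun X => ordBefore X ((A ∪ C) \ X)).card := by
        apply Finset.card_le_card
        intro σ _
        rw [Finset.mem_biUnion]
        exact exists_initial σ _ k (by omega)
    _ ≤ _ := by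
        apply Finset.card_biUnion_le_card_mul
        intro X hX
        rw [Finset.mem_powersetCard] at hX
        apply card_ordBefore_le
        · omega
        · rw [Finset.card_sdiff_of_subset hX.1]; omega
        · exact h
        · exact Finset.disjoint_sdiff

theorem ordBefore_nonempty {n : ℕ} (r : Fin n → ℕ) :
    ∃ σ : Equiv.Perm (Fin n), ∀ x y, r x < r y → σ x < σ y := by
  refine ⟨(Tuple.sort r).symm, fun x y hxy => ?_⟩
  by_contra hc
  have := Tuple.monotone_sort r (not_lt.1 hc)
  simp at this
  omega

section
variable {n k l : ℕ} {F : Finset (Finset (Fin n))} {C : Finset (Fin n) → Finset (Fin n)}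

theorem pair_disj (hx : ∀ A ∈ F, ∀ B ∈ F, Disjoint A (C B) → A = B) {A B : Finset (Fin n)}
    (hA : A ∈ F) (hB : B ∈ F) {σ : Equiv.Perm (Fin n)} (h1 : σ ∈ ordBefore A (C A))
    (h2 : σ ∈ ordBefore B (C B)) : A = B := by
  by_contra hne
  have a1 := mt (hx A hA B hB) hne
  have a2 := mt (hx B hB A hA) (Ne.symm hne)
  rw [Finset.not_disjoint_iff] at a1 a2
  obtain ⟨u, hu, hu'⟩ := a1
  obtain ⟨v, hv, hv'⟩ := a2
  exact lt_asymm (mem_ordBefore.1 h1 u hu v hv') (mem_ordBefore.1 h2 v hv u hu')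

theorem bollobas_aux (hF : ∀ A ∈ F, A.card = k) (hC : ∀ A ∈ F, (C A).card = l)
    (hd : ∀ A ∈ F, Disjoint A (C A)) (hx : ∀ A ∈ F, ∀ B ∈ F, Disjoint A (C B) → A = B) :
    F.card ≤ (k + l).choose k ∧ (F.card = (k + l).choose k → F.Nonempty →
      ∀ σ : Equiv.Perm (Fin n), ∃ A ∈ F, σ ∈ ordBefore A (C A)) := by
  rcases F.eq_empty_or_nonempty with rfl | ⟨A₀, hA₀⟩
  · simp
  set N := (ordBefore A₀ (C A₀)).card with hN
  have hcard : (F.biUnion fun A => ordBefore A (C A)).card = F.card * N := by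
    rw [Finset.card_biUnion]
    · rw [Finset.sum_const_nat]
      intro A hA
      apply le_antisymm <;> apply card_ordBefore_le <;> simp [hF, hC, hd, hA, hA₀]
    · intro A hA B hB hne
      rw [Function.onFun, Finset.disjoint_left]
      intro σ h1 h2
      exact hne (pair_disj hx hA hB h1 h2)
  have hlow := card_mul_ordBefore (hF _ hA₀) (hC _ hA₀) (hd _ hA₀)
  rw [← hN] at hlow
  have hup : F.card * N ≤ Fintype.card (Equiv.Perm (Fin n)) := by
    rw [← hcard]; exact Finset.card_le_univ _
  have hpos : 0 < N := by
    have : 0 < Fintype.card (Equiv.Perm (Fin n)) := Fintype.card_pos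
    by_contra h0
    have : N = 0 := by omega
    rw [this] at hlow; omega
  refine ⟨Nat.le_of_mul_le_mul_right (hup.trans hlow) hpos, fun heq _ σ => ?_⟩
  have : (F.biUnion fun A => ordBefore A (C A)) = Finset.univ := by
    rw [← Finset.card_eq_iff_eq_univ, hcard]
    apply le_antisymm hup
    rw [heq]; exact hlow
  have := this ▸ Finset.mem_univ σ
  simpa using this

/-- key swap lemma -/
theorem swap_rank (hx : ∀ A ∈ F, ∀ B ∈ F, Disjoint A (C B) → A = B)
    (hall : ∀ σ : Equiv.Perm (Fin n), ∃ A ∈ F, σ ∈ ordBefore A (C A))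
    {A : Finset (Fin n)} (hA : A ∈ F) {a c : Fin n} (ha : a ∈ A) (hc : c ∈ C A)
    (r : Fin n → ℕ) (hrc : r c = 1) (hra : r a = 2) (hr : ∀ x, x ≠ a → x ≠ c → r x = 0 ∨ r x = 3)
    (hrA : ∀ x ∈ A, x ≠ a → r x = 0) (hrC : ∀ x ∈ C A, x ≠ c → r x = 3) :
    ∃ B ∈ F, (∀ x ∈ B, r x < 2) ∧ (∀ x ∈ C B, 1 < r x) := by
  obtain ⟨σ, hσ⟩ := ordBefore_nonempty r
  obtain ⟨B, hB, hBσ⟩ := hall σ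
  have hBσ' := mem_ordBefore.1 hBσ
  have hca : σ c < σ a := hσ _ _ (by omega)
  have hne : c ≠ a := by rintro rfl; omega
  have hold : σ * Equiv.swap a c ∈ ordBefore A (C A) := by
    rw [mem_ordBefore]
    intro x hx y hy
    have hyA : y ≠ a ∨ y = a := by tauto
    have h1 : x ≠ c := by
      rintro rfl
      have := hx
      have := hrA x hx hne
      omega
    have h2 : y ≠ a := by
      rintro rfl
      have := hrC y hy hne.symm
      omega
    simp only [Equiv.Perm.mul_apply]
    by_cases hxa : x = a
    · subst hxa
      rw [Equiv.swap_apply_left]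
      by_cases hyc : y = c
      · subst hyc; rw [Equiv.swap_apply_right]; exact hca
      · rw [Equiv.swap_apply_of_ne_of_ne h2 hyc]
        exact hσ _ _ (by rw [hrC y hy hyc]; omega)
    · rw [Equiv.swap_apply_of_ne_of_ne hxa h1]
      by_cases hyc : y = c
      · subst hyc; rw [Equiv.swap_apply_right]; exact hσ _ _ (by rw [hrA x hx hxa]; omega)
      · rw [Equiv.swap_apply_of_ne_of_ne h2 hyc]
        exact hσ _ _ (by rw [hrC y hy hyc, hrA x hx hxa]; omega)
  have hBA : B ≠ A := by
    rintro rfl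
    exact lt_asymm hca (hBσ' a ha c hc)
  have hnot : σ * Equiv.swap a c ∉ ordBefore B (C B) := fun h => hBA (pair_disj hx hB hA h hold)
  have hbet : ∀ v, v ≠ a → v ≠ c → σ v < σ c ∨ σ a < σ v := by
    intro v h1 h2
    rcases hr v h1 h2 with h | h
    · left; exact hσ _ _ (by omega)
    · right; exact hσ _ _ (by omega)
  have key : c ∈ B ∧ a ∈ C B := by
    rw [mem_ordBefore] at hnot
    push Not at hnot
    obtain ⟨u, hu, v, hv, huv⟩ := hnot
    have hlt := hBσ' u hu v hv
    simp only [Equiv.Perm.mul_apply] at huv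
    by_cases hua : u = a
    · exfalso
      subst hua
      rw [Equiv.swap_apply_left] at huv
      by_cases hvc : v = c
      · subst hvc; exact lt_asymm hca hlt
      · have hvu : v ≠ u := by rintro rfl; exact lt_irrefl _ hlt
        rw [Equiv.swap_apply_of_ne_of_ne hvu hvc] at huv
        exact absurd (hlt.trans_le huv) (not_lt.2 hca.le)
    by_cases huc : u = c
    · subst huc
      by_cases hva : v = a
      · subst hva; exact ⟨hu, hv⟩
      · exfalso
        have hvu : v ≠ u := by rintro rfl; exact lt_irrefl _ hlt
        rw [Equiv.swap_apply_right, Equiv.swap_apply_of_ne_of_ne hva hvu] at huv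
        rcases hbet v hva hvu with h | h
        · exact lt_asymm h hlt
        · exact absurd h (not_lt.2 huv)
    · exfalso
      rw [Equiv.swap_apply_of_ne_of_ne hua huc] at huv
      by_cases hva : v = a
      · subst hva
        rw [Equiv.swap_apply_left] at huv
        rcases hbet u hua huc with h | h
        · exact absurd h (not_lt.2 huv)
        · exact lt_asymm h hlt
      by_cases hvc : v = c
      · subst hvc
        rw [Equiv.swap_apply_right] at huv
        exact absurd (huv.trans_lt hlt) (not_lt.2 hca.le)
      · rw [Equiv.swap_apply_of_ne_of_ne hva hvc] at huv
        exact absurd hlt (not_lt.2 huv)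
  refine ⟨B, hB, fun x hxB => ?_, fun x hxC => ?_⟩
  · by_contra h
    have h1 := hBσ' x hxB a key.2
    have hxa : x ≠ a := by rintro rfl; exact lt_irrefl _ h1
    have hxc : x ≠ c := by rintro rfl; omega
    rcases hr x hxa hxc with h' | h'
    · omega
    · exact lt_asymm h1 (hσ _ _ (by omega))
  · by_contra h
    have h1 := hBσ' c key.1 x hxC
    have hxc : x ≠ c := by rintro rfl; exact lt_irrefl _ h1
    have hxa : x ≠ a := by rintro rfl; omega
    rcases hr x hxa hxc with h' | h'
    · exact lt_asymm h1 (hσ _ _ (by omega))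
    · omega

theorem swap_closed (hF : ∀ A ∈ F, A.card = k) (hC : ∀ A ∈ F, (C A).card = l)
    (hd : ∀ A ∈ F, Disjoint A (C A)) (hx : ∀ A ∈ F, ∀ B ∈ F, Disjoint A (C B) → A = B)
    (hall : ∀ σ : Equiv.Perm (Fin n), ∃ A ∈ F, σ ∈ ordBefore A (C A))
    {A : Finset (Fin n)} (hA : A ∈ F) {a c : Fin n} (ha : a ∈ A) (hc : c ∈ C A) :
    insert c (A.erase a) ∈ F ∧
      C (insert c (A.erase a)) = insert a ((C A).erase c) := by
  have hdA := Finset.disjoint_left.1 (hd A hA)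
  have hcA : c ∉ A := fun h => hdA h hc
  have haC : a ∉ C A := fun h => hdA ha h
  have hca : c ≠ a := by rintro rfl; exact hcA ha
  have hk : 0 < A.card := Finset.card_pos.2 ⟨a, ha⟩
  have hl : 0 < (C A).card := Finset.card_pos.2 ⟨c, hc⟩
  have c1 : (insert c (A.erase a)).card = k := by
    rw [Finset.card_insert_of_notMem (by simp [hcA]), Finset.card_erase_of_mem ha, ← hF A hA]; omega
  have c2 : (insert a ((C A).erase c)).card = l := by
    rw [Finset.card_insert_of_notMem (by simp [haC]), Finset.card_erase_of_mem hc, ← hC A hA]; omega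
  obtain ⟨B, hB, hB1, -⟩ := swap_rank hx hall hA ha hc
    (fun x => if x = c then 1 else if x = a then 2 else if x ∈ A then 0 else 3)
    (by simp) (by simp [hca.symm]) (by intro x h1 h2; simp only [h1, h2, if_false]; split_ifs <;> simp)
    (by intro x h1 h2; have : x ≠ c := by rintro rfl; exact hcA h1
        simp [h1, h2, this])
    (by intro x h1 h2; have : x ≠ a := by rintro rfl; exact haC h1
        have h3 : x ∉ A := fun h => hdA h h1
        simp [h3, h2, this])
  obtain ⟨B', hB', -, hB2⟩ := swap_rank hx hall hA ha hc
    (fun x => if x = c then 1 else if x = a then 2 else if x ∈ C A then 3 else 0)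
    (by simp) (by simp [hca.symm]) (by intro x h1 h2; simp only [h1, h2, if_false]; split_ifs <;> simp)
    (by intro x h1 h2; have : x ≠ c := by rintro rfl; exact hcA h1
        have h3 : x ∉ C A := fun h => hdA h1 h
        simp [h3, h2, this])
    (by intro x h1 h2; have : x ≠ a := by rintro rfl; exact haC h1
        simp [h1, h2, this])
  have e1 : B = insert c (A.erase a) := by
    apply Finset.eq_of_subset_of_card_le
    · intro x hxB
      have := hB1 x hxB
      split_ifs at this with h1 h2 h3
      · simp [h1]
      · omega
      · simp [h2, h3]
      · omega
    · rw [c1, hF B hB]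
  have e2 : C B' = insert a ((C A).erase c) := by
    apply Finset.eq_of_subset_of_card_le
    · intro x hxB
      have := hB2 x hxB
      split_ifs at this with h1 h2 h3
      · omega
      · simp [h2]
      · simp [h1, h3]
      · omega
    · rw [c2, hC B' hB']
  have : B = B' := by
    apply hx B hB B' hB'
    rw [e1, e2, Finset.disjoint_left]
    intro x h1 h2
    simp only [Finset.mem_insert, Finset.mem_erase] at h1 h2
    rcases h1 with rfl | ⟨h1, h1'⟩
    · rcases h2 with h2 | h2
      · exact hca h2
      · exact h2.1 rfl
    · rcases h2 with h2 | h2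
      · exact h1 h2
      · exact hdA h1' h2.2
  subst this
  rw [← e1]
  exact ⟨hB, e2⟩

theorem bollobas_eq (hF : ∀ A ∈ F, A.card = k) (hC : ∀ A ∈ F, (C A).card = l)
    (hd : ∀ A ∈ F, Disjoint A (C A)) (hx : ∀ A ∈ F, ∀ B ∈ F, Disjoint A (C B) → A = B)
    (hne : F.Nonempty) (heq : F.card = (k + l).choose k) :
    ∃ U : Finset (Fin n), U.card = k + l ∧ F = U.powersetCard k := by
  have hall := (bollobas_aux hF hC hd hx).2 heq hne
  obtain ⟨A₀, hA₀⟩ := hne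
  set U := A₀ ∪ C A₀ with hU
  have hUc : U.card = k + l := by
    rw [hU, Finset.card_union_of_disjoint (hd _ hA₀), hF _ hA₀, hC _ hA₀]
  have main : ∀ m : ℕ, ∀ X, X ⊆ U → X.card = k → ∀ A ∈ F, A ∪ C A = U → (X \ A).card = m → X ∈ F := by
    intro m
    induction m with
    | zero =>
      intro X hXU hXk A hA hAU hm
      have : X ⊆ A := by
        rwa [Finset.card_eq_zero, Finset.sdiff_eq_empty_iff_subset] at hm
      rwa [Finset.eq_of_subset_of_card_le this (by rw [hXk, hF A hA])]
    | succ m ih =>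
      intro X hXU hXk A hA hAU hm
      obtain ⟨c, hc⟩ := Finset.card_pos.1 (by omega : 0 < (X \ A).card)
      have hcc : (A \ X).card = (X \ A).card := Finset.card_sdiff_comm (by rw [hXk, hF A hA])
      obtain ⟨a, ha⟩ := Finset.card_pos.1 (by omega : 0 < (A \ X).card)
      rw [Finset.mem_sdiff] at hc ha
      have hcC : c ∈ C A := by
        have := hXU hc.1
        rw [← hAU, Finset.mem_union] at this
        tauto
      obtain ⟨h1, h2⟩ := swap_closed hF hC hd hx hall hA ha.1 hcC
      refine ih X hXU hXk _ h1 ?_ ?_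
      · rw [h2, ← hAU]
        ext x
        simp only [Finset.mem_union, Finset.mem_insert, Finset.mem_erase]
        by_cases hxa : x = a
        · subst hxa; simp [ha.1]
        · by_cases hxc : x = c
          · subst hxc; simp [hcC]
          · simp [hxa, hxc]
      · have : X \ insert c (A.erase a) = (X \ A).erase c := by
          ext x
          simp only [Finset.mem_sdiff, Finset.mem_insert, Finset.mem_erase]
          by_cases hxa : x = a
          · subst hxa; simp [ha.2]
          · simp [hxa]; tauto
        rw [this, Finset.card_erase_of_mem (by simp [hc]), hm]; rfl
  refine ⟨U, hUc, (Finset.eq_of_subset_of_card_le ?_ ?_).symm⟩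
  · intro X hX
    rw [Finset.mem_powersetCard] at hX
    exact main _ X hX.1 hX.2 A₀ hA₀ rfl rfl
  · rw [heq, Finset.card_powersetCard, hUc]

end

theorem match_disj {n k q : ℕ} (hk : 3 ≤ k) (hn : n = q * k) {G : Finset (Finset (Fin n))}
    (hG : ∀ X ∈ G, X.card = k) (hq : G.card = q) (hcov : ∀ x, ∃ X ∈ G, x ∈ X) :
    ∀ X ∈ G, ∀ Y ∈ G, X ≠ Y → Disjoint X Y := by
  intro X hX Y hY hne
  by_contra h
  rw [Finset.not_disjoint_iff] at h
  obtain ⟨x, hxX, hxY⟩ := h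
  have hsub : (Finset.univ : Finset (Fin n)) ⊆ (G.erase X).biUnion id ∪ X.erase x := by
    intro z _
    obtain ⟨Z, hZ, hz⟩ := hcov z
    simp only [Finset.mem_union, Finset.mem_biUnion, Finset.mem_erase, id]
    by_cases hZX : Z = X
    · subst hZX
      by_cases hzx : z = x
      · subst hzx; left; exact ⟨Y, ⟨hne.symm, hY⟩, hxY⟩
      · right; exact ⟨hzx, hz⟩
    · left; exact ⟨Z, ⟨hZX, hZ⟩, hz⟩
  have h1 := Finset.card_le_card hsub
  have h2 := Finset.card_union_le ((G.erase X).biUnion id) (X.erase x)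
  have h3 : ((G.erase X).biUnion id).card ≤ (G.erase X).card * k :=
    Finset.card_biUnion_le_card_mul _ _ _ fun Z hZ => (hG Z (Finset.mem_of_mem_erase hZ)).le
  rw [Finset.card_erase_of_mem hX, hq] at h3
  rw [Finset.card_erase_of_mem hxX, hG X hX] at h2
  rw [Finset.card_univ, Fintype.card_fin] at h1
  have h4 : 0 < q := by rw [← hq]; exact Finset.card_pos.2 ⟨X, hX⟩
  obtain ⟨p, rfl⟩ : ∃ p, q = p + 1 := ⟨q - 1, by omega⟩
  simp only [Nat.add_sub_cancel] at h3
  rw [add_mul] at hn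
  omega

theorem match_exch {n k q : ℕ} (hk : 3 ≤ k) (hn : n = q * k) {G M : Finset (Finset (Fin n))}
    (hG : ∀ X ∈ G, X.card = k) (hGq : G.card = q) (hGcov : ∀ x, ∃ X ∈ G, x ∈ X)
    (hM : ∀ X ∈ M, X.card = k) (hMq : M.card = q) (hMcov : ∀ x, ∃ X ∈ M, x ∈ X)
    (h1 : (G \ M).card ≤ 1) : G ⊆ M := by
  rw [← Finset.sdiff_eq_empty_iff_subset]
  by_contra hne
  have hc : (G \ M).card = 1 := by
    have := Finset.card_pos.2 (Finset.nonempty_iff_ne_empty.2 hne)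
    omega
  have hc' : (M \ G).card = 1 := by
    rw [← hc]; exact Finset.card_sdiff_comm (by omega)
  obtain ⟨X, hX⟩ := Finset.card_eq_one.1 hc
  obtain ⟨B, hB⟩ := Finset.card_eq_one.1 hc'
  have hXm : X ∈ G \ M := by simp [hX]
  have hBm : B ∈ M \ G := by simp [hB]
  rw [Finset.mem_sdiff] at hXm hBm
  have hsub : X ⊆ B := by
    intro x hx
    obtain ⟨Z, hZ, hz⟩ := hMcov x
    by_cases hZG : Z ∈ G
    · have : Z ≠ X := by rintro rfl; exact hXm.2 hZ
      exact absurd hx (Finset.disjoint_left.1 (match_disj hk hn hG hGq hGcov Z hZG X hXm.1 this) hz)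
    · have : Z ∈ M \ G := by simp [hZ, hZG]
      rw [hB, Finset.mem_singleton] at this
      rwa [← this]
  have : X = B := Finset.eq_of_subset_of_card_le hsub (by rw [hG X hXm.1, hM B hBm.1])
  exact hXm.2 (this ▸ hBm.1)

theorem arith_key {n k q s s' r d y t : ℕ} (hk : 3 ≤ k) (hn : n = q * k) (hs : s + r = q)
    (hs2 : 2 ≤ s) (hss : s' ≤ s)
    (hd : d + 1 ≤ q) (hy : y + k + d = n) (h : y + t ≤ s' + (k - 1) * r) :
    k = 3 ∧ s = 2 ∧ s' = s ∧ t = 0 := by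
  obtain ⟨p, rfl⟩ : ∃ p, s = p + 2 := ⟨s - 2, by omega⟩
  obtain ⟨j, rfl⟩ : ∃ j, k = j + 3 := ⟨k - 3, by omega⟩
  subst hs
  have e : j + 3 - 1 = j + 2 := rfl
  rw [e] at h
  have : (p + 2 + r) * (j + 3) = (j + 2) * r + r + p * j + 3 * p + 2 * j + 6 := by ring
  rw [this] at hn
  have hpj : 0 ≤ p * j := Nat.zero_le _
  generalize (j + 2) * r = w at *
  generalize p * j = v at *
  omega

theorem exists_free {n k q : ℕ} (hk : 3 ≤ k) (hn : n = q * k)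
    {F M : Finset (Finset (Fin n))} (hF : ∀ A ∈ F, A.card = k)
    (heff : ∀ F' ⊆ F, (∀ x, ∃ X ∈ F', x ∈ X) →
      ∃ G ⊆ F', G.card = q ∧ ∀ x, ∃ X ∈ G, x ∈ X)
    (hMF : M ⊆ F) (hMq : M.card = q) (hMcov : ∀ x, ∃ X ∈ M, x ∈ X)
    {A : Finset (Fin n)} (hA : A ∈ F \ M) :
    ∃ D : Finset (Fin n), Disjoint A D ∧ D.card = q ∧ ∀ X ∈ F \ M, X ⊆ A ∪ D → X = A := by
  classical
  have hAF := (Finset.mem_sdiff.1 hA).1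
  have hAM := (Finset.mem_sdiff.1 hA).2
  have hM : ∀ X ∈ M, X.card = k := fun X hX => hF X (hMF hX)
  let P : Finset (Finset (Fin n)) :=
    Finset.univ.filter fun D => Disjoint A D ∧ ∀ X ∈ F \ M, X ⊆ A ∪ D → X = A
  have hP : ∀ D, D ∈ P ↔ Disjoint A D ∧ ∀ X ∈ F \ M, X ⊆ A ∪ D → X = A := by simp [P]
  have hPne : P.Nonempty := by
    refine ⟨∅, (hP _).2 ⟨by simp, fun X hX hXA => ?_⟩⟩
    rw [Finset.union_empty] at hXA
    exact Finset.eq_of_subset_of_card_le hXA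
      (by rw [hF A hAF, hF X (Finset.mem_sdiff.1 hX).1])
  obtain ⟨D, hD, hmax⟩ := Finset.exists_max_image P Finset.card hPne
  rw [hP] at hD
  obtain ⟨hAD, hDfree⟩ := hD
  by_cases hdq : q ≤ D.card
  · obtain ⟨D', hD', hc⟩ := Finset.exists_subset_card_eq hdq
    exact ⟨D', Finset.disjoint_of_subset_right hD' hAD, hc, fun X hX hXA =>
      hDfree X hX (hXA.trans (Finset.union_subset_union_right hD'))⟩
  exfalso
  push Not at hdq
  -- maximality
  have hex : ∀ y, y ∉ A ∪ D → ∃ X ∈ F \ M, X ≠ A ∧ X ⊆ insert y (A ∪ D) ∧ y ∈ X := by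
    intro y hy
    by_contra hcon
    push Not at hcon
    rw [Finset.mem_union, not_or] at hy
    have : insert y D ∈ P := by
      rw [hP]
      refine ⟨?_, fun X hX hXA => ?_⟩
      · rw [Finset.disjoint_insert_right]; exact ⟨hy.1, hAD⟩
      · rw [Finset.union_insert] at hXA
        by_contra hne
        have hyX := hcon X hX hne hXA
        exact hne (hDfree X hX ((Finset.subset_insert_iff_of_notMem hyX).1 hXA))
    have := hmax _ this
    rw [Finset.card_insert_of_notMem hy.2] at this
    omega
  choose! f hfF hfA hfsub hfy using hex
  set Y := (A ∪ D)ᶜ with hY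
  have hYm : ∀ y, y ∈ Y ↔ y ∉ A ∪ D := by simp [hY]
  set 𝒜 := Y.image f with h𝒜
  have h𝒜m : ∀ X ∈ 𝒜, X ∈ F \ M ∧ X ≠ A ∧ (X ∩ Y).card ≤ 1 := by
    intro X hX
    obtain ⟨y, hy, rfl⟩ := Finset.mem_image.1 hX
    rw [hYm] at hy
    refine ⟨hfF y hy, hfA y hy, ?_⟩
    haveI : Nonempty (Fin n) := ⟨y⟩
    rw [Finset.card_le_one_iff_subset_singleton]
    refine ⟨y, fun z hz => ?_⟩
    rw [Finset.mem_inter, hYm] at hz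
    have := hfsub y hy hz.1
    rw [Finset.mem_insert] at this
    rw [Finset.mem_singleton]
    tauto
  choose b hbM hb using hMcov
  set D₀ := D \ 𝒜.biUnion id with hD₀
  set B₀ := D₀.image b with hB₀
  have hB₀M : B₀ ⊆ M := by
    intro X hX
    obtain ⟨y, hy, rfl⟩ := Finset.mem_image.1 hX
    exact hbM y
  have hB₀D : ∀ X ∈ B₀, 1 ≤ (X ∩ D).card := by
    intro X hX
    obtain ⟨y, hy, rfl⟩ := Finset.mem_image.1 hX
    exact Finset.card_pos.2 ⟨y, Finset.mem_inter.2 ⟨hb y, (Finset.mem_sdiff.1 hy).1⟩⟩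
  have hB₀c : B₀.card ≤ D.card :=
    Finset.card_image_le.trans (Finset.card_le_card Finset.sdiff_subset)
  obtain ⟨G, hGsub, hGq, hGcov⟩ := heff (insert A (𝒜 ∪ B₀)) (by
      intro X hX
      simp only [Finset.mem_insert, Finset.mem_union] at hX
      rcases hX with rfl | hX | hX
      · exact hAF
      · exact (Finset.mem_sdiff.1 (h𝒜m X hX).1).1
      · exact hMF (hB₀M hX)) (by
      intro x
      by_cases hxA : x ∈ A
      · exact ⟨A, by simp, hxA⟩
      by_cases hxD : x ∈ D
      · by_cases hx : x ∈ 𝒜.biUnion id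
        · obtain ⟨X, hX, hxX⟩ := Finset.mem_biUnion.1 hx
          exact ⟨X, by simp [hX], hxX⟩
        · refine ⟨b x, ?_, hb x⟩
          have : b x ∈ B₀ := Finset.mem_image_of_mem _ (Finset.mem_sdiff.2 ⟨hxD, hx⟩)
          simp [this]
      · have hx : x ∉ A ∪ D := by simp [hxA, hxD]
        have : f x ∈ 𝒜 := Finset.mem_image_of_mem _ ((hYm x).2 hx)
        exact ⟨f x, by simp [this], hfy x hx⟩)
  have hMcov : ∀ x, ∃ X ∈ M, x ∈ X := fun x => ⟨b x, hbM x, hb x⟩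
  have hGF : ∀ X ∈ G, X ∈ F := by
    intro X hX
    have := hGsub hX
    simp only [Finset.mem_insert, Finset.mem_union] at this
    rcases this with rfl | hX | hX
    · exact hAF
    · exact (Finset.mem_sdiff.1 (h𝒜m X hX).1).1
    · exact hMF (hB₀M hX)
  have hGk : ∀ X ∈ G, X.card = k := fun X hX => hF X (hGF X hX)
  have hGd := match_disj hk hn hGk hGq hGcov
  have hMd := match_disj hk hn hM hMq hMcov
  set N := G \ M with hN
  set R := G ∩ M with hR
  have hNR : N.card + R.card = q := by rw [← hGq]; exact Finset.card_sdiff_add_card_inter G M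
  have hNA : ∀ X ∈ N, X ≠ A → X ∈ 𝒜 := by
    intro X hX hXA
    rw [hN, Finset.mem_sdiff] at hX
    have := hGsub hX.1
    simp only [Finset.mem_insert, Finset.mem_union] at this
    rcases this with h | h | h
    · exact absurd h hXA
    · exact h
    · exact absurd (hB₀M h) hX.2
  have hRB : R ⊆ B₀ := by
    intro X hX
    rw [hR, Finset.mem_inter] at hX
    have := hGsub hX.1
    simp only [Finset.mem_insert, Finset.mem_union] at this
    rcases this with rfl | h | h
    · exact absurd hX.2 hAM
    · exact absurd hX.2 (Finset.mem_sdiff.1 (h𝒜m X h).1).2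
    · exact h
  have hN2 : 2 ≤ N.card := by
    by_contra hlt
    have hs := match_exch hk hn hGk hGq hGcov hM hMq hMcov (by rw [← hN]; omega)
    have : N = ∅ := by rw [hN, Finset.sdiff_eq_empty_iff_subset]; exact hs
    rw [this, Finset.card_empty] at hNR
    have := Finset.card_le_card hRB
    omega
  have hYc : Y.card + k + D.card = n := by
    have h1 := Finset.card_add_card_compl (A ∪ D)
    rw [Finset.card_union_of_disjoint hAD, Fintype.card_fin, hF A hAF, ← hY] at h1
    omega
  have hsplit : ∀ X : Finset (Fin n), (X ∩ A).card + (X ∩ Y).card + (X ∩ D).card = X.card := by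
    intro X
    have e1 : (X ∩ A) ∪ (X ∩ D) = X ∩ (A ∪ D) := Finset.inter_union_distrib_left X A D |>.symm
    have d1 : Disjoint (X ∩ A) (X ∩ D) :=
      Finset.disjoint_of_subset_left Finset.inter_subset_right
        (Finset.disjoint_of_subset_right Finset.inter_subset_right hAD)
    have e2 := Finset.card_union_of_disjoint d1
    have e3 : X ∩ Y = X \ (A ∪ D) := by ext z; simp [hY]
    have e4 := Finset.card_sdiff_add_card_inter X (A ∪ D)
    rw [e3]; rw [e1] at e2; omega
  have hYle : Y.card ≤ ∑ X ∈ N, (X ∩ Y).card + ∑ X ∈ R, (X ∩ Y).card := by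
    have : ∑ X ∈ N, (X ∩ Y).card + ∑ X ∈ R, (X ∩ Y).card = ∑ X ∈ G, (X ∩ Y).card := by
      rw [← Finset.sum_union (Finset.disjoint_sdiff_inter G M), Finset.sdiff_union_inter]
    rw [this]
    refine le_trans (Finset.card_le_card ?_) Finset.card_biUnion_le
    intro y hy
    obtain ⟨X, hX, hyX⟩ := hGcov y
    exact Finset.mem_biUnion.2 ⟨X, hX, Finset.mem_inter.2 ⟨hyX, hy⟩⟩
  have hNle : ∑ X ∈ N, (X ∩ Y).card ≤ (N.erase A).card := by
    have hA0 : (A ∩ Y).card = 0 := by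
      rw [Finset.card_eq_zero]; ext z; simp [hY]; tauto
    have : ∑ X ∈ N, (X ∩ Y).card = ∑ X ∈ N.erase A, (X ∩ Y).card := by
      symm
      apply Finset.sum_erase
      exact hA0
    rw [this, Finset.card_eq_sum_ones]
    apply Finset.sum_le_sum
    intro X hX
    rw [Finset.mem_erase] at hX
    exact (h𝒜m X (hNA X hX.2 hX.1)).2.2
  have hRle : ∑ X ∈ R, (X ∩ Y).card + ∑ X ∈ R, (X ∩ A).card ≤ (k - 1) * R.card := by
    rw [← Finset.sum_add_distrib, mul_comm, ← smul_eq_mul]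
    apply Finset.sum_le_card_nsmul
    intro X hX
    have h1 := hB₀D X (hRB hX)
    have h2 := hsplit X
    rw [hGk X (Finset.mem_inter.1 hX).1] at h2
    omega
  obtain ⟨hk3, hs2, hse, ht⟩ := arith_key (y := Y.card) (d := D.card) (s := N.card)
    (s' := (N.erase A).card) (r := R.card) (t := ∑ X ∈ R, (X ∩ A).card) hk hn hNR hN2
    (Finset.card_le_card (Finset.erase_subset _ _)) (by omega) hYc (by omega)
  have hAN : A ∉ N := by
    intro h
    rw [Finset.card_erase_of_mem h] at hse
    omega
  have hRA : ∀ X ∈ R, X ∩ A = ∅ := by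
    intro X hX
    rw [Finset.sum_eq_zero_iff] at ht
    exact Finset.card_eq_zero.1 (ht X hX)
  -- final contradiction
  have final : ∀ P P', P ≠ P' → N = {P, P'} → (P ∩ A).card = 1 → False := by
    intro P P' hne hNe h1
    have hPN : P ∈ N := by simp [hNe]
    have hP'N : P' ∈ N := by simp [hNe]
    have hPG := (Finset.mem_sdiff.1 hPN)
    have hP'G := (Finset.mem_sdiff.1 hP'N)
    have hdisj := hGd P hPG.1 P' hP'G.1 hne
    have hAsub : A ⊆ P ∪ P' := by
      intro x hx
      obtain ⟨X, hX, hxX⟩ := hGcov x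
      by_cases hXM : X ∈ M
      · have := hRA X (Finset.mem_inter.2 ⟨hX, hXM⟩)
        exact absurd (Finset.mem_inter.2 ⟨hxX, hx⟩) (by simp [this])
      · have : X ∈ N := Finset.mem_sdiff.2 ⟨hX, hXM⟩
        rw [hNe, Finset.mem_insert, Finset.mem_singleton] at this
        rcases this with rfl | rfl <;> simp [hxX]
    have hP'A : (P' ∩ A).card = 2 := by
      have e : A = (P ∩ A) ∪ (P' ∩ A) := by
        rw [← Finset.union_inter_distrib_right]
        exact (Finset.inter_eq_right.2 hAsub).symm
      have e2 := Finset.card_union_of_disjoint (s := P ∩ A) (t := P' ∩ A)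
        (Finset.disjoint_of_subset_left Finset.inter_subset_left
        (Finset.disjoint_of_subset_right Finset.inter_subset_left hdisj))
      rw [← e, hF A hAF] at e2
      omega
    have hz1 : (P' \ A).card = 1 := by
      have := Finset.card_sdiff_add_card_inter P' A
      rw [hGk P' hP'G.1] at this
      omega
    obtain ⟨z, hz⟩ := Finset.card_eq_one.1 hz1
    obtain ⟨G₂, hG₂sub, hG₂q, hG₂cov⟩ := heff (insert A (insert P (insert (b z) R))) (by
      intro X hX
      simp only [Finset.mem_insert] at hX
      rcases hX with rfl | rfl | rfl | hX
      · exact hAF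
      · exact hGF _ hPG.1
      · exact hMF (hbM z)
      · exact hGF X (Finset.mem_inter.1 hX).1) (by
      intro x
      obtain ⟨X, hX, hxX⟩ := hGcov x
      by_cases hXM : X ∈ M
      · exact ⟨X, by simp [hR, hX, hXM], hxX⟩
      · have : X ∈ N := Finset.mem_sdiff.2 ⟨hX, hXM⟩
        rw [hNe, Finset.mem_insert, Finset.mem_singleton] at this
        rcases this with rfl | rfl
        · exact ⟨X, by simp, hxX⟩
        · by_cases hxA : x ∈ A
          · exact ⟨A, by simp, hxA⟩
          · have : x ∈ X \ A := by simp [hxX, hxA]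
            rw [hz, Finset.mem_singleton] at this
            subst this
            exact ⟨b x, by simp, hb x⟩)
    have hG₂k : ∀ X ∈ G₂, X.card = k := by
      intro X hX
      have := hG₂sub hX
      simp only [Finset.mem_insert] at this
      rcases this with rfl | rfl | rfl | hX
      · exact hF _ hAF
      · exact hGk _ hPG.1
      · exact hM _ (hbM z)
      · exact hGk X (Finset.mem_inter.1 hX).1
    have hG₂d := match_disj hk hn hG₂k hG₂q hG₂cov
    have hsubAP : G₂ \ M ⊆ {A, P} := by
      intro X hX
      rw [Finset.mem_sdiff] at hX
      have := hG₂sub hX.1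
      simp only [Finset.mem_insert] at this
      rcases this with rfl | rfl | rfl | h
      · simp
      · simp
      · exact absurd (hbM z) hX.2
      · exact absurd (Finset.mem_inter.1 h).2 hX.2
    have hAP : A ≠ P := by rintro rfl; exact hAN hPN
    have hle : (G₂ \ M).card ≤ 1 := by
      by_contra hgt
      have heq : G₂ \ M = {A, P} := Finset.eq_of_subset_of_card_le hsubAP (by
        rw [Finset.card_pair hAP]; omega)
      have hA2 : A ∈ G₂ \ M := by simp [heq]
      have hP2 : P ∈ G₂ \ M := by simp [heq]
      have := hG₂d P (Finset.mem_sdiff.1 hP2).1 A (Finset.mem_sdiff.1 hA2).1 hAP.symm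
      rw [Finset.disjoint_iff_inter_eq_empty] at this
      rw [this, Finset.card_empty] at h1
      omega
    have hG₂M := match_exch hk hn hG₂k hG₂q hG₂cov hM hMq hMcov hle
    have hG₂R : G₂ ⊆ insert (b z) R := by
      intro X hX
      have := hG₂sub hX
      simp only [Finset.mem_insert] at this ⊢
      rcases this with rfl | rfl | h
      · exact absurd (hG₂M hX) hAM
      · exact absurd (hG₂M hX) hPG.2
      · exact h
    have h3 := Finset.card_le_card hG₂R
    have h4 := Finset.card_insert_le (b z) R
    omega
  obtain ⟨P₁, P₂, hne, hNe⟩ := Finset.card_eq_two.1 hs2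
  have hP₁N : P₁ ∈ N := by simp [hNe]
  have hP₂N : P₂ ∈ N := by simp [hNe]
  have hP₁G := (Finset.mem_sdiff.1 hP₁N)
  have hP₂G := (Finset.mem_sdiff.1 hP₂N)
  have hsum : (P₁ ∩ A).card + (P₂ ∩ A).card = 3 := by
    have hdisj := hGd P₁ hP₁G.1 P₂ hP₂G.1 hne
    have e2 := Finset.card_union_of_disjoint (s := P₁ ∩ A) (t := P₂ ∩ A)
        (Finset.disjoint_of_subset_left Finset.inter_subset_left
        (Finset.disjoint_of_subset_right Finset.inter_subset_left hdisj))
    rw [← e2, ← Finset.union_inter_distrib_right, ← hk3, ← hF A hAF]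
    congr 1
    rw [Finset.inter_eq_right]
    intro x hx
    obtain ⟨X, hX, hxX⟩ := hGcov x
    by_cases hXM : X ∈ M
    · have := hRA X (Finset.mem_inter.2 ⟨hX, hXM⟩)
      exact absurd (Finset.mem_inter.2 ⟨hxX, hx⟩) (by simp [this])
    · have : X ∈ N := Finset.mem_sdiff.2 ⟨hX, hXM⟩
      rw [hNe, Finset.mem_insert, Finset.mem_singleton] at this
      rcases this with rfl | rfl <;> simp [hxX]
  have hlt : ∀ P ∈ N, (P ∩ A).card < 3 := by
    intro P hPN
    by_contra hge
    have hPG := (Finset.mem_sdiff.1 hPN).1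
    have h1 : P ∩ A = P := Finset.eq_of_subset_of_card_le Finset.inter_subset_left
      (by rw [hGk P hPG]; omega)
    have h2 : P ∩ A = A := Finset.eq_of_subset_of_card_le Finset.inter_subset_right
      (by rw [hF A hAF]; omega)
    exact hAN (by rw [← h2, h1]; exact hPN)
  have l1 := hlt P₁ hP₁N
  have l2 := hlt P₂ hP₂N
  rcases (by omega : (P₁ ∩ A).card = 1 ∨ (P₂ ∩ A).card = 1) with h | h
  · exact final P₁ P₂ hne hNe h
  · exact final P₂ P₁ hne.symm (by rw [hNe, Finset.pair_comm]) h

/-- Let `n = qk`, `k ≥ 3`, `q ≥ 1`, and let `F ⊆ C([n],k)` be non-trivial and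
union-`q`-efficient. Then `|F| ≤ C(n-q,k) + q`, with equality only for the family
consisting of `q` pairwise disjoint `k`-sets, each containing one of `q`
designated elements, together with all `k`-subsets of the remaining `n-q`
elements. -/
theorem stmt6 (q k n : ℕ) (hk : 3 ≤ k) (hq : 1 ≤ q) (hn : n = q * k)
    (F : Finset (Finset (Fin n))) (hF : ∀ A ∈ F, A.card = k)
    (hnontriv : F.sup id = Finset.univ)
    (heff : ∀ F' ⊆ F, F'.sup id = Finset.univ →
      ∃ G ⊆ F', G.card = q ∧ G.sup id = Finset.univ) :
    F.card ≤ (n - q).choose k + q ∧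
    (F.card = (n - q).choose k + q →
      ∃ (T : Finset (Fin n)) (B : Fin n → Finset (Fin n)),
        T.card = q ∧
        (∀ x ∈ T, B x ∈ F ∧ x ∈ B x ∧ (B x).card = k) ∧
        (∀ x ∈ T, ∀ y ∈ T, x ≠ y → Disjoint (B x) (B y)) ∧
        F = T.image B ∪ Finset.powersetCard k Tᶜ) := by
  classical
  have hsup : ∀ H : Finset (Finset (Fin n)), H.sup id = Finset.univ ↔ ∀ x, ∃ X ∈ H, x ∈ X := by
    intro H
    rw [Finset.eq_univ_iff_forall]
    simp only [Finset.mem_sup, id]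
  have heff' : ∀ F' ⊆ F, (∀ x, ∃ X ∈ F', x ∈ X) →
      ∃ G ⊆ F', G.card = q ∧ ∀ x, ∃ X ∈ G, x ∈ X := by
    intro F' h1 h2
    obtain ⟨G, h3, h4, h5⟩ := heff F' h1 ((hsup _).2 h2)
    exact ⟨G, h3, h4, (hsup _).1 h5⟩
  obtain ⟨M, hMF, hMq, hMcov⟩ := heff' F (Finset.Subset.refl _) ((hsup _).1 hnontriv)
  have hM : ∀ X ∈ M, X.card = k := fun X hX => hF X (hMF hX)
  have hMd := match_disj hk hn hM hMq hMcov
  have hfree := fun A (hA : A ∈ F \ M) => exists_free hk hn hF heff' hMF hMq hMcov hA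
  choose! D hAD hDq hD using hfree
  have hF' : ∀ A ∈ F \ M, A.card = k := fun A hA => hF A (Finset.mem_sdiff.1 hA).1
  have hcardF : F.card = (F \ M).card + q := by
    rw [← hMq, Finset.card_sdiff_add_card_eq_card hMF]
  have hCc : ∀ A ∈ F \ M, ((A ∪ D A)ᶜ).card = n - (k + q) := by
    intro A hA
    rw [Finset.card_compl, Finset.card_union_of_disjoint (hAD A hA), hF' A hA, hDq A hA,
      Fintype.card_fin]
  have hd : ∀ A ∈ F \ M, Disjoint A (A ∪ D A)ᶜ := by
    intro A _
    rw [Finset.disjoint_left]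
    intro x hx
    simp [hx]
  have hx : ∀ A ∈ F \ M, ∀ B ∈ F \ M, Disjoint A (B ∪ D B)ᶜ → A = B := by
    intro A hA B hB h
    refine hD B hB A hA fun x hx => ?_
    have := Finset.disjoint_left.1 h hx
    rwa [Finset.mem_compl, not_not] at this
  have hb := bollobas_aux (F := F \ M) (C := fun A => (A ∪ D A)ᶜ) hF' hCc hd hx
  -- arithmetic: either `q = 1` or `k + (n - (k + q)) = n - q`
  rcases Nat.lt_or_ge 1 q with hq2 | hq1
  · have hle : k + q ≤ n := by
      rw [hn]; nlinarith
    have hkl : k + (n - (k + q)) = n - q := by omega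
    rw [hkl] at hb
    refine ⟨by omega, fun heq => ?_⟩
    have hpos : 0 < (n - q).choose k := Nat.choose_pos (by omega)
    have hFc : (F \ M).card = (n - q).choose k := by omega
    obtain ⟨U, hU, hFU⟩ := bollobas_eq (F := F \ M) (C := fun A => (A ∪ D A)ᶜ) hF' hCc hd hx
      (Finset.card_pos.1 (by omega)) (by rw [hkl]; exact hFc)
    rw [hkl] at hU
    choose b hbM hbx using hMcov
    have hTc : Uᶜ.card = q := by
      rw [Finset.card_compl, hU, Fintype.card_fin]; omega
    have himg : Uᶜ.image b = M := by
      apply Finset.Subset.antisymm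
      · intro X hX
        obtain ⟨y, _, rfl⟩ := Finset.mem_image.1 hX
        exact hbM y
      · intro X hX
        have : ¬ X ⊆ U := by
          intro h
          have : X ∈ F \ M := by
            rw [hFU, Finset.mem_powersetCard]; exact ⟨h, hM X hX⟩
          exact (Finset.mem_sdiff.1 this).2 hX
        obtain ⟨y, hyX, hyU⟩ := Finset.not_subset.1 this
        refine Finset.mem_image.2 ⟨y, Finset.mem_compl.2 hyU, ?_⟩
        by_contra hne
        exact Finset.disjoint_left.1 (hMd _ (hbM y) X hX hne) (hbx y) hyX
    have hinj : Set.InjOn b (Uᶜ : Finset (Fin n)) := by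
      apply Finset.card_image_iff.1
      rw [himg, hMq, hTc]
    refine ⟨Uᶜ, b, hTc, fun x _ => ⟨hMF (hbM x), hbx x, hM _ (hbM x)⟩, ?_, ?_⟩
    · intro x hx y hy hxy
      exact hMd _ (hbM x) _ (hbM y) fun h => hxy (hinj hx hy h)
    · rw [himg, compl_compl, ← hFU, Finset.union_sdiff_of_subset hMF]
  · have hq1 : q = 1 := by omega
    subst hq1
    have hnk : n = k := by omega
    have hAll : ∀ X ∈ F, X = Finset.univ := by
      intro X hX
      rw [← Finset.card_eq_iff_eq_univ, hF X hX, Fintype.card_fin, hnk]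
    have hFM : F \ M = ∅ := by
      obtain ⟨X, hX⟩ := Finset.card_eq_one.1 hMq
      have hXM : X ∈ M := by simp [hX]
      rw [Finset.sdiff_eq_empty_iff_subset]
      intro Z hZ
      rw [hAll Z hZ, ← hAll X (hMF hXM)]
      exact hXM
    have hc0 : (n - 1).choose k = 0 := Nat.choose_eq_zero_of_lt (by omega)
    rw [hFM, Finset.card_empty] at hcardF
    refine ⟨by omega, fun _ => ?_⟩
    have hx0 : 0 < n := by omega
    choose b hbM hbx using hMcov
    have hFeq : F = M := (Finset.sdiff_eq_empty_iff_subset.1 hFM).antisymm hMF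
    refine ⟨{⟨0, hx0⟩}, b, by simp, fun x _ => ⟨hMF (hbM x), hbx x, hM _ (hbM x)⟩, ?_, ?_⟩
    · intro x hx y hy hxy
      rw [Finset.mem_singleton] at hx hy
      exact absurd (hx.trans hy.symm) hxy
    · have : Finset.powersetCard k ({⟨0, hx0⟩}ᶜ : Finset (Fin n)) = ∅ := by
        rw [Finset.powersetCard_eq_empty, Finset.card_compl, Fintype.card_fin]
        simp; omega
      rw [this, Finset.union_empty, Finset.image_singleton, hFeq]
      symm
      apply Finset.eq_of_subset_of_card_le
      · simp [hbM]
      · simp [hMq]
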